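/- Let R: [0,∞)² → [0,∞) be continuous, homogeneous of degree 1 (i.e., R(sx,sy) = s·R(x,y) for all s > 0 and x,y ≥ 0), and satisfy R(x,y) ≤ min(x,y). Then for all a, b > 0, the double integral ∫_0^1 ∫_0^1 R(au, bv)/(uv) du dv is finite and equals ∫_0^1 R(au, b)/u du + ∫_0^1 R(a, bv)/v dv. -/

import Mathlib

open MeasureTheory Filter Topology Set

theorem tcdi_aux (f : ℝ × ℝ → ℝ) (T : Set (ℝ × ℝ)) (hT : MeasurableSet T)
    (h1 : ∀ u v : ℝ, v < u → (u, v) ∈ T) (h2 : ∀ u v : ℝ, (u, v) ∈ T → v ≤ u)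
    (hf : IntegrableOn f (Ioc 0 1 ×ˢ Ioc 0 1) volume)
    (hh : ∀ u ∈ Ioc (0 : ℝ) 1, ∀ t ∈ Ioc (0 : ℝ) 1, u * f (u, u * t) = f (1, t)) :
    ∫ z in Ioc (0 : ℝ) 1 ×ˢ Ioc (0 : ℝ) 1, T.indicator f z = ∫ t in Ioc (0 : ℝ) 1, f (1, t) := by
  have hi : IntegrableOn (T.indicator f) (Ioc 0 1 ×ˢ Ioc 0 1) volume := hf.indicator hT
  rw [Measure.volume_eq_prod] at hi ⊢
  rw [setIntegral_prod _ hi]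
  have key : ∀ u ∈ Ioc (0 : ℝ) 1, ∫ v in Ioc (0 : ℝ) 1, T.indicator f (u, v)
      = ∫ t in Ioc (0 : ℝ) 1, f (1, t) := by
    intro u hu
    have e1 : ∫ v in Ioc (0 : ℝ) 1, T.indicator f (u, v)
        = ∫ v in Ioc (0 : ℝ) 1, (Ioc 0 u).indicator (fun v => f (u, v)) v := by
      apply setIntegral_congr_ae measurableSet_Ioc
      filter_upwards [Measure.ae_ne volume u] with v hv hv1
      by_cases hvu : v < u
      · rw [indicator_of_mem (h1 u v hvu), indicator_of_mem (show v ∈ Ioc 0 u from ⟨hv1.1, hvu.le⟩)]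
      · have hlt : u < v := lt_of_le_of_ne (not_lt.1 hvu) (Ne.symm hv)
        rw [indicator_of_notMem (fun h => absurd (h2 u v h) (not_le.2 hlt)),
          indicator_of_notMem (fun h : v ∈ Ioc 0 u => absurd h.2 (not_le.2 hlt))]
    have hsub : Ioc (0 : ℝ) 1 ∩ Ioc 0 u = Ioc 0 u :=
      inter_eq_right.2 (Ioc_subset_Ioc_right hu.2)
    rw [e1, setIntegral_indicator measurableSet_Ioc, hsub,
      ← intervalIntegral.integral_of_le hu.1.le]
    have e2 := intervalIntegral.mul_integral_comp_mul_left (a := 0) (b := 1)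
      (f := fun v => f (u, v)) (c := u)
    simp only [mul_zero, mul_one] at e2
    rw [← e2, ← intervalIntegral.integral_const_mul, intervalIntegral.integral_of_le zero_le_one]
    exact setIntegral_congr_fun measurableSet_Ioc (fun t ht => hh u hu t ht)
  rw [setIntegral_congr_fun measurableSet_Ioc key]
  simp

/-- **Key integral identity for homogeneous tail copulas** (used to evaluate
`Cov(Γ_i, Γ_j)` in the proof of Theorem 2 of "The Estimation Risk in Extreme
Systemic Risk Forecasts").

Let `R : [0,∞)² → [0,∞)` be continuous, homogeneous of degree 1 and satisfy
`R(x,y) ≤ min(x,y)`.  Then for all `a, b > 0` the double integral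
`∫₀¹∫₀¹ R(au, bv)/(uv) du dv` is finite and equals
`∫₀¹ R(au, b)/u du + ∫₀¹ R(a, bv)/v dv`. -/
theorem tail_copula_double_integral_identity
    (R : ℝ → ℝ → ℝ)
    (hcont : ContinuousOn (fun z : ℝ × ℝ => R z.1 z.2) (Ici 0 ×ˢ Ici 0))
    (hnonneg : ∀ x y : ℝ, 0 ≤ x → 0 ≤ y → 0 ≤ R x y)
    (hhom : ∀ s > (0 : ℝ), ∀ x y : ℝ, 0 ≤ x → 0 ≤ y → R (s * x) (s * y) = s * R x y)
    (hbound : ∀ x y : ℝ, 0 ≤ x → 0 ≤ y → R x y ≤ min x y)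
    (a b : ℝ) (ha : 0 < a) (hb : 0 < b) :
    IntegrableOn (fun z : ℝ × ℝ => R (a * z.1) (b * z.2) / (z.1 * z.2))
      (Ioc 0 1 ×ˢ Ioc 0 1) volume ∧
    (∫ z : ℝ × ℝ in Ioc 0 1 ×ˢ Ioc 0 1, R (a * z.1) (b * z.2) / (z.1 * z.2))
      = (∫ u in Ioc (0 : ℝ) 1, R (a * u) b / u) + ∫ v in Ioc (0 : ℝ) 1, R a (b * v) / v := by
  set f : ℝ × ℝ → ℝ := fun z => R (a * z.1) (b * z.2) / (z.1 * z.2) with hfdef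
  have hS : MeasurableSet (Ioc (0 : ℝ) 1 ×ˢ Ioc (0 : ℝ) 1) :=
    measurableSet_Ioc.prod measurableSet_Ioc
  have hc : ContinuousOn f (Ioc 0 1 ×ˢ Ioc 0 1) := by
    apply ContinuousOn.div
    · refine hcont.comp (f := fun z : ℝ × ℝ => (a * z.1, b * z.2)) (by fun_prop) ?_
      rintro ⟨u, v⟩ ⟨hu, hv⟩
      exact ⟨(mul_pos ha hu.1).le, (mul_pos hb hv.1).le⟩
    · fun_prop
    · rintro ⟨u, v⟩ ⟨hu, hv⟩
      exact (mul_pos hu.1 hv.1).ne'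
  have hint : IntegrableOn f (Ioc 0 1 ×ˢ Ioc 0 1) volume := by
    have hr : IntegrableOn (fun x : ℝ => x ^ (-(1 / 2) : ℝ)) (Ioc 0 1) volume := by
      rw [← intervalIntegrable_iff_integrableOn_Ioc_of_le zero_le_one]
      exact intervalIntegral.intervalIntegrable_rpow' (by norm_num)
    have hg : IntegrableOn (fun z : ℝ × ℝ => √(a * b) * (z.1 ^ (-(1 / 2) : ℝ) *
        z.2 ^ (-(1 / 2) : ℝ))) (Ioc 0 1 ×ˢ Ioc 0 1) volume := by
      rw [IntegrableOn, Measure.volume_eq_prod, ← Measure.prod_restrict]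
      exact (hr.mul_prod hr).const_mul _
    refine Integrable.mono' hg (hc.aestronglyMeasurable hS) ?_
    refine (ae_restrict_iff' hS).2 (Eventually.of_forall ?_)
    rintro ⟨u, v⟩ ⟨hu, hv⟩
    have hu0 : 0 < u := hu.1
    have hv0 : 0 < v := hv.1
    have hau := mul_pos ha hu0
    have hbv := mul_pos hb hv0
    have huv := mul_pos hu0 hv0
    have hR0 := hnonneg _ _ hau.le hbv.le
    have hRm := hbound _ _ hau.le hbv.le
    simp only [hfdef]
    rw [Real.norm_of_nonneg (div_nonneg hR0 huv.le), div_le_iff₀ huv,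
      ← Real.mul_rpow hu0.le hv0.le, mul_assoc, ← Real.rpow_add_one huv.ne']
    have : (-(1 / 2) + 1 : ℝ) = 1 / 2 := by norm_num
    rw [this, ← Real.sqrt_eq_rpow, ← Real.sqrt_mul (mul_pos ha hb).le]
    apply Real.le_sqrt_of_sq_le
    have h1 := hRm.trans (min_le_left _ _)
    have h2 := hRm.trans (min_le_right _ _)
    nlinarith [mul_le_mul h1 h2 hR0 hau.le]
  refine ⟨hint, ?_⟩
  set T : Set (ℝ × ℝ) := {z | z.2 ≤ z.1} with hTdef
  have hT : MeasurableSet T := measurableSet_le measurable_snd measurable_fst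
  have hom : ∀ s x y : ℝ, 0 < s → 0 < x → 0 < y → s * f (s * x, s * y) = f (x, y) / s * s := by
    intro s x y hs hx hy
    have h := hhom s hs (a * x) (b * y) (mul_pos ha hx).le (mul_pos hb hy).le
    simp only [hfdef]
    rw [mul_left_comm a s x, mul_left_comm b s y, h]
    field_simp
  have A := tcdi_aux f T hT (fun u v h => h.le) (fun u v h => h) hint (by
    intro u hu t ht
    have := hom u 1 t hu.1 one_pos ht.1
    rwa [mul_one, div_mul_cancel₀ _ hu.1.ne'] at this)
  have B := tcdi_aux (fun z => f z.swap) (Prod.swap ⁻¹' Tᶜ) (measurable_swap hT.compl)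
    (fun u v h => by simpa [hTdef] using h)
    (fun u v h => by
      have : v < u := by simpa [hTdef] using h
      exact this.le)
    (by
      have := hint
      rw [IntegrableOn, Measure.volume_eq_prod, ← Measure.prod_restrict] at this ⊢
      exact this.swap) (by
    intro u hu t ht
    have := hom u t 1 hu.1 ht.1 one_pos
    rwa [mul_one, div_mul_cancel₀ _ hu.1.ne'] at this)
  have C : ∫ z in Ioc (0 : ℝ) 1 ×ˢ Ioc (0 : ℝ) 1,
      (Prod.swap ⁻¹' Tᶜ).indicator (fun z => f z.swap) z
      = ∫ z in Ioc (0 : ℝ) 1 ×ˢ Ioc (0 : ℝ) 1, Tᶜ.indicator f z := by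
    rw [Measure.volume_eq_prod]
    exact setIntegral_prod_swap _ _ (Tᶜ.indicator f)
  rw [C] at B
  have D : ∫ z in Ioc (0 : ℝ) 1 ×ˢ Ioc (0 : ℝ) 1, f z
      = (∫ z in Ioc (0 : ℝ) 1 ×ˢ Ioc (0 : ℝ) 1, T.indicator f z)
        + ∫ z in Ioc (0 : ℝ) 1 ×ˢ Ioc (0 : ℝ) 1, Tᶜ.indicator f z := by
    rw [← integral_add (hint.indicator hT) (hint.indicator hT.compl)]
    congr 1
    ext z
    exact (congrFun (indicator_self_add_compl T f) z).symm
  rw [D, A, B, add_comm]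
  simp [hfdef]
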